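/- arXiv:2212.01917 — 2 statements merged into one kernel-verified Lean document; each statement's English description precedes it below -/
import Mathlib

section
/- Let V be a vector space of finite dimension over the finite field F_q, let G ≤ GL(V) be an irreducible subgroup, and let H be a proper subgroup of G. Then −μ_{Î(G,H)}(H,G) = Σ_{E∈Ψ'(G,H)} (−1)^{|E|} = Σ_{X∈Ψ(G,H)} (−1)^{|X|}. -/
variable {F V : Type*} [Field F] [AddCommGroup V] [Module F V]

/-- The stabilizer in `G` of a subspace `W` of `V`: `{g ∈ G : gW = W}`. -/
def sstab (G : Subgroup (V ≃ₗ[F] V)) (W : Submodule F V) : Subgroup (V ≃ₗ[F] V) where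
  carrier := {g | g ∈ G ∧ Submodule.map (g : V →ₗ[F] V) W = W}
  one_mem' := ⟨G.one_mem, by simp⟩
  mul_mem' := by
    rintro a b ⟨ha, ha'⟩ ⟨hb, hb'⟩
    refine ⟨G.mul_mem ha hb, ?_⟩
    rw [show ((a * b : V ≃ₗ[F] V) : V →ₗ[F] V) = (a : V →ₗ[F] V).comp (b : V →ₗ[F] V) from rfl,
      Submodule.map_comp, hb', ha']
  inv_mem' := by
    rintro a ⟨ha, ha'⟩
    refine ⟨G.inv_mem ha, ?_⟩
    conv_lhs => rw [← ha']
    rw [← Submodule.map_comp]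
    rw [show ((a⁻¹ : V ≃ₗ[F] V) : V →ₗ[F] V).comp (a : V →ₗ[F] V) = LinearMap.id from by
      ext x; exact a.symm_apply_apply x]
    exact Submodule.map_id W

/-- The family `C(G,H)` of stabilizers of proper non-trivial subspaces of `V` containing `H`. -/
def Cfam (G H : Subgroup (V ≃ₗ[F] V)) : Set (Subgroup (V ≃ₗ[F] V)) :=
  {M | ∃ W : Submodule F V, W ≠ ⊥ ∧ W ≠ ⊤ ∧ H ≤ sstab G W ∧ M = sstab G W}

/-- `S(V,H)*`: the proper non-trivial `H`-invariant subspaces of `V`. -/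
def SStar (H : Subgroup (V ≃ₗ[F] V)) : Set (Submodule F V) :=
  {W | W ≠ ⊥ ∧ W ≠ ⊤ ∧ ∀ g ∈ H, Submodule.map ((g : V ≃ₗ[F] V) : V →ₗ[F] V) W = W}

/-- `Ψ(G,H)`: subsets of `C(G,H)` whose intersection (taken to be `G` when empty) is not `H`. -/
def Psi (G H : Subgroup (V ≃ₗ[F] V)) : Set (Set (Subgroup (V ≃ₗ[F] V))) :=
  {X | X ⊆ Cfam G H ∧ G ⊓ sInf X ≠ H}

/-- `Ψ(G,H)ᶜ`: non-empty subsets of `C(G,H)` whose intersection is exactly `H`. -/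
def PsiC (G H : Subgroup (V ≃ₗ[F] V)) : Set (Set (Subgroup (V ≃ₗ[F] V))) :=
  {Y | Y ⊆ Cfam G H ∧ Y ≠ ∅ ∧ G ⊓ sInf Y = H}

/-- `Ψ'(G,H)`: subsets `E` of `S(V,H)*` with `∩_{W ∈ E} stab_G(W) ≠ H`
(the empty intersection being `G`). -/
def Psi' (G H : Subgroup (V ≃ₗ[F] V)) : Set (Set (Submodule F V)) :=
  {E | E ⊆ SStar H ∧ (G ⊓ ⨅ W ∈ E, sstab G W) ≠ H}

/-- The reducible subgroup ideal `I(G,H)`. -/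
def redIdeal (G H : Subgroup (V ≃ₗ[F] V)) : Set (Subgroup (V ≃ₗ[F] V)) :=
  {K | ∃ M ∈ Cfam G H, H ≤ K ∧ K ≤ M}

/-- The poset `Î(G,H) = I(G,H) ∪ {H, G}`. -/
def Ihat (G H : Subgroup (V ≃ₗ[F] V)) : Set (Subgroup (V ≃ₗ[F] V)) :=
  redIdeal G H ∪ {H, G}

/-- A subgroup `K ≤ GL(V)` is irreducible if the only `K`-invariant subspaces are `0` and `V`. -/
def IsIrred (K : Subgroup (V ≃ₗ[F] V)) : Prop :=
  ∀ W : Submodule F V, (∀ g ∈ K, Submodule.map ((g : V ≃ₗ[F] V) : V →ₗ[F] V) W = W) →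
    W = ⊥ ∨ W = ⊤

/-- `mu` is the Möbius function of the subposet of the subgroup lattice given by `S`,
ordered by inclusion: `mu x y = 0` unless `x ≤ y`, `mu x x = 1`, and
`∑_{x ≤ t ≤ y} mu x t = 0` whenever `x < y` (all elements ranging in `S`). -/
def IsMobius (S : Set (Subgroup (V ≃ₗ[F] V)))
    (mu : Subgroup (V ≃ₗ[F] V) → Subgroup (V ≃ₗ[F] V) → ℤ) : Prop :=
  (∀ x ∈ S, ∀ y ∈ S, ¬x ≤ y → mu x y = 0) ∧
  (∀ x ∈ S, mu x x = 1) ∧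
  (∀ x ∈ S, ∀ y ∈ S, x < y → (∑ᶠ t ∈ {t | t ∈ S ∧ x ≤ t ∧ t ≤ y}, mu x t) = 0)

/-!
This is a crosscut argument. For `E ⊆ S(V,H)*` let `g E` be the intersection of the stabilizers
of the members of `E`, and let `μ` be the Möbius function of `Î(G,H)`. The recursion for `μ` gives
`∑_{H < t ≤ z} μ(H,t) = -1` for `z > H`, while this sum is empty for `z = H`. Therefore
`∑_{g E ≠ H} (-1)^|E| = -∑_E (-1)^|E| ∑_{H < t ≤ g E} μ(H,t)`. After exchanging the sums, the
coefficient of `-μ(H,t)` is the alternating sum over all subsets of `{W | t ≤ stab_G(W)}`; it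
vanishes unless that set is empty, which for `t > H` in `Î(G,H)` happens only at `t = G`, by
irreducibility of `G`. Only the family of stabilizers matters, not how it is indexed, so the same
computation applies with `C(G,H)` in place of `S(V,H)*`.
-/

open Finset

section PowersetSums

variable {ι : Type*}

theorem sum_powerset_filter_forall_neg_one_pow_card (B : Finset ι) (p : ι → Prop)
    [DecidablePred p] :
    ∑ E ∈ B.powerset with ∀ a ∈ E, p a, (-1 : ℤ) ^ #E = if ∀ a ∈ B, ¬p a then 1 else 0 := by
  classical
  have filter_powerset : {E ∈ B.powerset | ∀ a ∈ E, p a} = {a ∈ B | p a}.powerset := by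
    ext E
    simp only [mem_filter, mem_powerset, subset_iff, forall_and]
  simp only [filter_powerset, sum_powerset_neg_one_pow_card, filter_eq_empty_iff]

open scoped Classical in
theorem finsum_mem_subset_coe_finset {M : Type*} [AddCommMonoid M] (B : Finset ι)
    (p : Set ι → Prop) (w : Set ι → M) :
    ∑ᶠ E ∈ {E : Set ι | E ⊆ B ∧ p E}, w E =
      ∑ E ∈ ({E ∈ B.powerset | p E} : Finset (Finset ι)), w E := by
  have eq_image : {E : Set ι | E ⊆ B ∧ p E} =
      (↑) '' (({E ∈ B.powerset | p E} : Finset (Finset ι)) : Set (Finset ι)) := by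
    ext E
    simp only [coe_filter, mem_powerset, Set.mem_image, Set.mem_ofPred_eq]
    constructor
    · rintro ⟨hEB, hpE⟩
      lift E to Finset ι using B.finite_toSet.subset hEB
      exact ⟨E, ⟨coe_subset.mp hEB, hpE⟩, rfl⟩
    · rintro ⟨E, ⟨hEB, hpE⟩, rfl⟩
      exact ⟨coe_subset.mpr hEB, hpE⟩
  rw [eq_image, finsum_mem_image coe_injective.injOn, finsum_mem_coe_finset]

end PowersetSums

section Crosscut

variable {ι α : Type*}

/-- The part above `x` of the order ideal generated by `C`, with `x` and `y` adjoined. For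
`C = C(G,H)`, `x = H` and `y = G` it is the poset `Î(G,H)`. -/
def idealHat [Preorder α] (x y : α) (C : Set α) : Set α :=
  {t | ∃ c ∈ C, x ≤ t ∧ t ≤ c} ∪ {x, y}

theorem subset_idealHat [Preorder α] {x : α} (y : α) {C : Set α} (hC : C ⊆ Set.Ici x) :
    C ⊆ idealHat x y C :=
  fun c hc => Or.inl ⟨c, hc, hC hc, le_rfl⟩

theorem left_mem_idealHat [Preorder α] (x y : α) (C : Set α) : x ∈ idealHat x y C :=
  Or.inr (Or.inl rfl)

theorem right_mem_idealHat [Preorder α] (x y : α) (C : Set α) : y ∈ idealHat x y C :=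
  Or.inr (Or.inr rfl)

theorem idealHat_subset_Icc [Preorder α] {x y : α} {C : Set α} (hxy : x ≤ y)
    (hC : C ⊆ Set.Iic y) : idealHat x y C ⊆ Set.Icc x y := by
  rintro t (⟨c, hc, hxt, htc⟩ | rfl | rfl)
  · exact ⟨hxt, htc.trans (hC hc)⟩
  · exact Set.left_mem_Icc.mpr hxy
  · exact Set.right_mem_Icc.mpr hxy

theorem forall_not_le_iff_eq_of_mem_idealHat [PartialOrder α] {x y t : α} {C : Set α}
    (hC : C ⊆ Set.Iio y) (ht : t ∈ idealHat x y C) (hxt : x < t) :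
    (∀ c ∈ C, ¬t ≤ c) ↔ t = y := by
  constructor
  · intro hnot
    rcases ht with ⟨c, hc, -, htc⟩ | rfl | hty
    · exact absurd htc (hnot c hc)
    · exact absurd hxt (lt_irrefl _)
    · exact hty
  · rintro rfl c hc
    exact (hC hc).not_ge

open scoped Classical in
theorem sum_neg_one_pow_card_of_forall_le [PartialOrder α] {B : Finset ι} {f : ι → α} {x y t : α}
    (hf : Set.MapsTo f B (Set.Iio y)) (ht : t ∈ idealHat x y (f '' B)) (hxt : x < t) :
    ∑ E ∈ B.powerset with ∀ a ∈ E, t ≤ f a, (-1 : ℤ) ^ #E = if t = y then 1 else 0 := by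
  have maximal := forall_not_le_iff_eq_of_mem_idealHat (Set.image_subset_iff.mpr hf) ht hxt
  simp only [Set.forall_mem_image, mem_coe] at maximal
  rw [sum_powerset_filter_forall_neg_one_pow_card]
  exact if_congr maximal rfl rfl

theorem inf_finset_inf_mem_idealHat [SemilatticeInf α] [OrderTop α] {x y : α} {A : Set ι}
    {f : ι → α} (hxy : x ≤ y) (hf : Set.MapsTo f A (Set.Ici x)) {E : Finset ι} (hE : ↑E ⊆ A) :
    y ⊓ E.inf f ∈ idealHat x y (f '' A) := by
  rcases E.eq_empty_or_nonempty with rfl | ⟨a, ha⟩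
  · simpa only [inf_empty, inf_top_eq] using right_mem_idealHat x y (f '' A)
  · exact Or.inl ⟨f a, Set.mem_image_of_mem f (hE ha),
      le_inf hxy (Finset.le_inf fun b hb => hf (hE hb)), inf_le_right.trans (inf_le ha)⟩

open scoped Classical in
theorem sum_filter_lt_le_eq_ite [PartialOrder α] {P : Finset α} {m : α → ℤ} {x z : α}
    (hx : x ∈ P) (hmx : m x = 1) (hxz : x ≤ z)
    (hm : x < z → ∑ t ∈ P with x ≤ t ∧ t ≤ z, m t = 0) :
    ∑ t ∈ P with x < t ∧ t ≤ z, m t = if z ≠ x then -1 else 0 := by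
  split_ifs with hne
  · have eq_insert : {t ∈ P | x ≤ t ∧ t ≤ z} = insert x {t ∈ P | x < t ∧ t ≤ z} := by
      ext t
      simp only [mem_insert, mem_filter, le_iff_eq_or_lt (a := x)]
      grind
    have hsum := hm (hxz.lt_of_ne' hne)
    rw [eq_insert, sum_insert (by simp only [mem_filter, lt_irrefl, false_and, and_false,
      not_false_eq_true]), hmx] at hsum
    linarith
  · obtain rfl : z = x := not_not.mp hne
    rw [filter_false_of_mem fun t _ ht => ht.1.not_ge ht.2, sum_empty]

open scoped Classical in
theorem sum_neg_one_pow_card_of_inf_ne [SemilatticeInf α] [OrderTop α] {B : Finset ι}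
    {P : Finset α} {f : ι → α} {m : α → ℤ} {x y : α} (hxy : x < y)
    (hf : Set.MapsTo f B (Set.Ico x y)) (hP : (P : Set α) = idealHat x y (f '' B))
    (hmx : m x = 1) (hm : ∀ z ∈ P, x < z → ∑ t ∈ P with x ≤ t ∧ t ≤ z, m t = 0) :
    ∑ E ∈ B.powerset with y ⊓ E.inf f ≠ x, (-1 : ℤ) ^ #E = -m y := by
  have mem_P {t : α} : t ∈ P ↔ t ∈ idealHat x y (f '' B) := by rw [← hP, mem_coe]
  have P_subset {t : α} (ht : t ∈ P) : t ∈ Set.Icc x y :=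
    idealHat_subset_Icc hxy.le (Set.image_subset_iff.mpr fun a ha => (hf ha).2.le) (mem_P.mp ht)
  have inner_sum (E : Finset ι) (hE : E ∈ B.powerset) :
      ∑ t ∈ P with x < t, (if ∀ a ∈ E, t ≤ f a then (-1) ^ #E * m t else 0) =
        -if y ⊓ E.inf f ≠ x then (-1 : ℤ) ^ #E else 0 := by
    have inf_mem : y ⊓ E.inf f ∈ P := mem_P.mpr <| inf_finset_inf_mem_idealHat hxy.le
      (fun a ha => (hf ha).1) (coe_subset.mpr (mem_powerset.mp hE))
    have filter_eq : {t ∈ {t ∈ P | x < t} | ∀ a ∈ E, t ≤ f a} =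
        {t ∈ P | x < t ∧ t ≤ y ⊓ E.inf f} := by
      rw [filter_filter]
      refine filter_congr fun t ht => ?_
      simp only [_root_.le_inf_iff, Finset.le_inf_iff, (P_subset ht).2, true_and]
    rw [← sum_filter, filter_eq, ← mul_sum, sum_filter_lt_le_eq_ite
      (mem_P.mpr (left_mem_idealHat ..)) hmx (P_subset inf_mem).1 (hm _ inf_mem)]
    split_ifs <;> ring
  have coefficient (t : α) (ht : t ∈ {t ∈ P | x < t}) :
      ∑ E ∈ B.powerset, (if ∀ a ∈ E, t ≤ f a then (-1 : ℤ) ^ #E * m t else 0) =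
        if t = y then m t else 0 := by
    obtain ⟨htP, hxt⟩ := mem_filter.mp ht
    rw [← sum_filter, ← sum_mul, sum_neg_one_pow_card_of_forall_le (fun a ha => (hf ha).2)
      (mem_P.mp htP) hxt, ite_mul, one_mul, zero_mul]
  have y_mem : y ∈ {t ∈ P | x < t} := mem_filter.mpr ⟨mem_P.mpr (right_mem_idealHat ..), hxy⟩
  calc ∑ E ∈ B.powerset with y ⊓ E.inf f ≠ x, (-1 : ℤ) ^ #E
      = -∑ E ∈ B.powerset, ∑ t ∈ P with x < t,
          (if ∀ a ∈ E, t ≤ f a then (-1) ^ #E * m t else 0) := by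
        rw [sum_congr rfl inner_sum, sum_neg_distrib, neg_neg, sum_filter]
    _ = -∑ t ∈ P with x < t, if t = y then m t else 0 := by
        rw [sum_comm, sum_congr rfl coefficient]
    _ = -m y := by rw [sum_ite_eq' _ y, if_pos y_mem]

theorem finsum_neg_one_pow_ncard_of_iInf_ne [CompleteLattice α] {A : Set ι} {f : ι → α}
    {m : α → ℤ} {x y : α} (hxy : x < y) (hf : Set.MapsTo f A (Set.Ico x y)) (hA : A.Finite)
    (hP : (idealHat x y (f '' A)).Finite) (hmx : m x = 1)
    (hm : ∀ z ∈ idealHat x y (f '' A), x < z →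
      ∑ᶠ t ∈ {t | t ∈ idealHat x y (f '' A) ∧ x ≤ t ∧ t ≤ z}, m t = 0) :
    ∑ᶠ E ∈ {E : Set ι | E ⊆ A ∧ y ⊓ ⨅ a ∈ E, f a ≠ x}, (-1 : ℤ) ^ E.ncard = -m y := by
  classical
  lift A to Finset ι using hA
  have sum_Icc (z : α) (hz : z ∈ hP.toFinset) (hxz : x < z) :
      ∑ t ∈ hP.toFinset with x ≤ t ∧ t ≤ z, m t = 0 := by
    rw [← hm z (hP.mem_toFinset.mp hz) hxz, ← finsum_mem_coe_finset]
    simp only [coe_filter, hP.mem_toFinset]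
  rw [finsum_mem_subset_coe_finset]
  simpa only [Set.ncard_coe_finset, Finset.inf_eq_iInf, mem_coe] using
    sum_neg_one_pow_card_of_inf_ne hxy hf hP.coe_toFinset hmx sum_Icc

end Crosscut

section Stabilizers

variable {G H : Subgroup (V ≃ₗ[F] V)}

theorem le_sstab_iff {K : Subgroup (V ≃ₗ[F] V)} (hKG : K ≤ G) {W : Submodule F V} :
    K ≤ sstab G W ↔ ∀ g ∈ K, Submodule.map (g : V →ₗ[F] V) W = W :=
  ⟨fun h _ hg => (h hg).2, fun h g hg => ⟨hKG hg, h g hg⟩⟩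

theorem image_sstab_SStar (hHG : H ≤ G) : sstab G '' SStar H = Cfam G H := by
  ext M
  constructor
  · rintro ⟨W, ⟨hbot, htop, hinv⟩, rfl⟩
    exact ⟨W, hbot, htop, (le_sstab_iff hHG).mpr hinv, rfl⟩
  · rintro ⟨W, hbot, htop, hle, rfl⟩
    exact ⟨W, ⟨hbot, htop, (le_sstab_iff hHG).mp hle⟩, rfl⟩

theorem IsIrred.sstab_lt (hG : IsIrred G) {W : Submodule F V} (hbot : W ≠ ⊥) (htop : W ≠ ⊤) :
    sstab G W < G :=
  lt_of_le_not_ge (fun _ hg => hg.1) fun hle =>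
    (hG W ((le_sstab_iff le_rfl).mp hle)).elim hbot htop

theorem IsIrred.Cfam_subset_Ico (hG : IsIrred G) : Cfam G H ⊆ Set.Ico H G := by
  rintro _ ⟨W, hbot, htop, hle, rfl⟩
  exact ⟨hle, hG.sstab_lt hbot htop⟩

theorem Ihat_eq_idealHat (G H : Subgroup (V ≃ₗ[F] V)) : Ihat G H = idealHat H G (Cfam G H) :=
  rfl

variable {mu : Subgroup (V ≃ₗ[F] V) → Subgroup (V ≃ₗ[F] V) → ℤ}

theorem neg_mobius_Ihat_eq_sum_of_image_eq_Cfam (hHG : H < G) (hGirr : IsIrred G)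
    (hI : (Ihat G H).Finite) (hmu : IsMobius (Ihat G H) mu) {ι : Type*} {A : Set ι}
    {f : ι → Subgroup (V ≃ₗ[F] V)} (hA : A.Finite) (hfA : f '' A = Cfam G H) :
    -mu H G = ∑ᶠ E ∈ {E : Set ι | E ⊆ A ∧ G ⊓ ⨅ a ∈ E, f a ≠ H}, (-1 : ℤ) ^ E.ncard := by
  have mapsTo : Set.MapsTo f A (Set.Ico H G) :=
    Set.image_subset_iff.mp (hfA.trans_subset hGirr.Cfam_subset_Ico)
  have H_mem : H ∈ Ihat G H := left_mem_idealHat H G (Cfam G H)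
  obtain ⟨-, mu_self, mu_sum⟩ := hmu
  specialize mu_self H H_mem
  specialize mu_sum H H_mem
  rw [Ihat_eq_idealHat, ← hfA] at hI mu_sum
  exact (finsum_neg_one_pow_ncard_of_iInf_ne hHG mapsTo hA hI mu_self mu_sum).symm

theorem neg_mobius_Ihat_eq_sum_Psi' (hHG : H < G) (hGirr : IsIrred G) (hI : (Ihat G H).Finite)
    (hS : (SStar H).Finite) (hmu : IsMobius (Ihat G H) mu) :
    -mu H G = ∑ᶠ E ∈ Psi' G H, (-1 : ℤ) ^ E.ncard :=
  neg_mobius_Ihat_eq_sum_of_image_eq_Cfam hHG hGirr hI hmu hS (image_sstab_SStar hHG.le)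

theorem neg_mobius_Ihat_eq_sum_Psi (hHG : H < G) (hGirr : IsIrred G) (hI : (Ihat G H).Finite)
    (hmu : IsMobius (Ihat G H) mu) :
    -mu H G = ∑ᶠ X ∈ Psi G H, (-1 : ℤ) ^ X.ncard := by
  have Cfam_finite : (Cfam G H).Finite :=
    hI.subset (subset_idealHat G fun _ hM => (hGirr.Cfam_subset_Ico hM).1)
  simpa only [Psi, sInf_eq_iInf, id] using
    neg_mobius_Ihat_eq_sum_of_image_eq_Cfam hHG hGirr hI hmu Cfam_finite (Set.image_id _)

end Stabilizers

theorem neg_mobius_Ihat_eq_sums_general (G H : Subgroup (V ≃ₗ[F] V)) (hHG : H < G)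
    (hGirr : IsIrred G) (hI : (Ihat G H).Finite) (hS : (SStar H).Finite)
    (mu : Subgroup (V ≃ₗ[F] V) → Subgroup (V ≃ₗ[F] V) → ℤ) (hmu : IsMobius (Ihat G H) mu) :
    -mu H G = (∑ᶠ E ∈ Psi' G H, ((-1 : ℤ) ^ E.ncard)) ∧
    -mu H G = (∑ᶠ X ∈ Psi G H, ((-1 : ℤ) ^ X.ncard)) :=
  ⟨neg_mobius_Ihat_eq_sum_Psi' hHG hGirr hI hS hmu, neg_mobius_Ihat_eq_sum_Psi hHG hGirr hI hmu⟩

/-- Theorem 4.5 (first part): `−μ_{Î(G,H)}(H,G) = Σ_{E ∈ Ψ'(G,H)} (−1)^{|E|}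
= Σ_{X ∈ Ψ(G,H)} (−1)^{|X|}`. -/
theorem neg_mobius_Ihat_eq_sums [Fintype F] [FiniteDimensional F V]
    (G H : Subgroup (V ≃ₗ[F] V)) (hHG : H < G) (hGirr : IsIrred G)
    (mu : Subgroup (V ≃ₗ[F] V) → Subgroup (V ≃ₗ[F] V) → ℤ) (hmu : IsMobius (Ihat G H) mu) :
    -mu H G = (∑ᶠ E ∈ Psi' G H, ((-1 : ℤ) ^ E.ncard)) ∧
    -mu H G = (∑ᶠ X ∈ Psi G H, ((-1 : ℤ) ^ X.ncard)) := by
  have : Finite V := Module.finite_of_finite F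
  have : Finite (V ≃ₗ[F] V) := DFunLike.finite _
  exact neg_mobius_Ihat_eq_sums_general G H hHG hGirr (Set.toFinite _) (Set.toFinite _) mu hmu
end

section
/- Let V be a vector space of finite dimension over the finite field F_q, let G ≤ GL(V) be an irreducible subgroup, and let H be a proper subgroup of G. Then μ_{Î(G,H)}(H,G) = χ̃(Δ1), where Δ1 is the simplicial complex whose set of faces is Ψ'(G,H); explicitly, μ_{Î(G,H)}(H,G) = (Σ_{i≥0} (−1)^i F_i) − 1, where F_i is the number of sets E ∈ Ψ'(G,H) with |E| = i+1. -/
variable {F V : Type*} [Field F] [AddCommGroup V] [Module F V]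

/-!
By irreducibility, an element of `Î(G,H)` other than `H` lies below no stabilizer `stab_G(W)` with
`W ∈ S(V,H)*` exactly when it is `G`: the stabilizers form a crosscut. In the alternating sum of
`(-1)^|E|` over the faces `E`, write the indicator of `⋂_{W ∈ E} stab_G(W) ≠ H` as
`-∑ μ(H,K)` over the `K` with `H < K ≤ ⋂_{W ∈ E} stab_G(W)`, and exchange the two sums. The
coefficient of `-μ(H,K)` becomes the alternating number of subsets of `{W | K ≤ stab_G(W)}`, which
vanishes unless this set is empty, that is, unless `K = G`.
-/

section Crosscut

variable {P ι : Type*} [PartialOrder P] [LocallyFiniteOrder P] [DecidableEq P]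

theorem sum_Ioc_bot_mu [OrderBot P] (x : P) :
    ∑ t ∈ Finset.Ioc ⊥ x, IncidenceAlgebra.mu ℤ ⊥ t = if x = ⊥ then 0 else -1 := by
  have hsum := IncidenceAlgebra.sum_Icc_mu_right (𝕜 := ℤ) ⊥ x
  rw [← Finset.add_sum_Ioc_eq_sum_Icc bot_le, IncidenceAlgebra.mu_self] at hsum
  split_ifs at hsum ⊢ <;> grind

theorem mu_bot_top_eq_neg_sum_of_crosscut [BoundedOrder P] [Nontrivial P] [Fintype ι]
    {m : ι → P} {φ : Finset ι → P} (hφ : ∀ E : Finset ι, IsGLB (m '' E) (φ E))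
    (hm : ∀ i, m i ≠ ⊤) (hcover : ∀ x, x ≠ ⊥ → x ≠ ⊤ → ∃ i, x ≤ m i) :
    IncidenceAlgebra.mu ℤ (⊥ : P) ⊤ = -∑ E with φ E ≠ ⊥, (-1 : ℤ) ^ E.card := by
  classical
  have le_iff (t : P) (E : Finset ι) : t ≤ φ E ↔ E ⊆ Finset.univ.filter (t ≤ m ·) := by
    simp [le_isGLB_iff (hφ E), mem_lowerBounds, Finset.subset_iff]
  have not_covered_iff {t : P} (ht : t ≠ ⊥) : Finset.univ.filter (t ≤ m ·) = ∅ ↔ t = ⊤ := by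
    simp only [Finset.filter_eq_empty_iff, Finset.mem_univ, true_implies]
    refine ⟨fun hnot ↦ by_contra fun htop ↦ ?_, fun htop i hi ↦ hm i (top_le_iff.mp (htop ▸ hi))⟩
    obtain ⟨i, hi⟩ := hcover t ht htop
    exact hnot hi
  symm
  calc -∑ E with φ E ≠ ⊥, (-1 : ℤ) ^ E.card
      = ∑ E, (-1 : ℤ) ^ E.card * ∑ t ∈ Finset.Ioc ⊥ (φ E), IncidenceAlgebra.mu ℤ ⊥ t := by
        rw [Finset.sum_filter, ← Finset.sum_neg_distrib]
        refine Finset.sum_congr rfl fun E _ ↦ ?_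
        rw [sum_Ioc_bot_mu]
        split_ifs <;> simp_all
    _ = ∑ t ∈ Finset.Ioc ⊥ ⊤, ∑ E ∈ (Finset.univ.filter (t ≤ m ·)).powerset,
          (-1 : ℤ) ^ E.card * IncidenceAlgebra.mu ℤ ⊥ t := by
        simp only [Finset.mul_sum]
        refine Finset.sum_comm' fun E t ↦ ?_
        simp [le_iff, and_comm]
    _ = ∑ t ∈ Finset.Ioc ⊥ ⊤, if t = ⊤ then IncidenceAlgebra.mu ℤ ⊥ t else 0 := by
        refine Finset.sum_congr rfl fun t ht ↦ ?_
        rw [← Finset.sum_mul, Finset.sum_powerset_neg_one_pow_card, ite_mul, one_mul, zero_mul]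
        simp only [not_covered_iff (Finset.mem_Ioc.mp ht).1.ne']
    _ = IncidenceAlgebra.mu ℤ ⊥ ⊤ := by
        rw [Finset.sum_ite_eq', if_pos (Finset.right_mem_Ioc.mpr bot_lt_top)]

end Crosscut

section ReducedEulerChar

variable {ι : Type*}

/-- The reduced Euler characteristic `χ̃(Δ) = (∑_{i ≥ 0} (-1)^i F_i) - 1` of a simplicial complex,
given by its set `Δ` of faces (the empty face included); `F_i` counts the faces with `i + 1`
vertices. Only meaningful for finitely many finite faces, as `Set.ncard` of an infinite set
is `0`. -/
noncomputable def reducedEulerChar (Δ : Set (Set ι)) : ℤ :=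
  (∑ᶠ i : ℕ, (-1 : ℤ) ^ i * ({E | E ∈ Δ ∧ E.ncard = i + 1}.ncard : ℤ)) - 1

theorem finsum_mem_neg_one_pow_ncard {Δ : Set (Set ι)} (hΔ : Δ.Finite) {n : ℕ}
    (hn : ∀ E ∈ Δ, E.ncard ≤ n) :
    ∑ᶠ E ∈ Δ, (-1 : ℤ) ^ E.ncard =
      ∑ k ∈ Finset.range (n + 1), (-1 : ℤ) ^ k * ({E | E ∈ Δ ∧ E.ncard = k}.ncard : ℤ) := by
  have ncard_eq (k : ℕ) :
      {E | E ∈ Δ ∧ E.ncard = k}.ncard = (hΔ.toFinset.filter (·.ncard = k)).card := by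
    rw [← Set.ncard_coe_finset]
    simp
  have maps_to : ∀ E ∈ hΔ.toFinset, E.ncard ∈ Finset.range (n + 1) := fun E hE ↦
    Finset.mem_range_succ_iff.mpr (hn E (hΔ.mem_toFinset.mp hE))
  rw [finsum_mem_eq_finite_toFinset_sum _ hΔ, ← Finset.sum_fiberwise_of_maps_to maps_to]
  refine Finset.sum_congr rfl fun k _ ↦ ?_
  rw [ncard_eq, mul_comm, ← nsmul_eq_mul, ← Finset.sum_const]
  exact Finset.sum_congr rfl fun E hE ↦ by rw [(Finset.mem_filter.mp hE).2]

theorem reducedEulerChar_eq_neg_finsum {Δ : Set (Set ι)} (hΔ : Δ.Finite)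
    (hfin : ∀ E ∈ Δ, E.Finite) (hempty : ∅ ∈ Δ) :
    reducedEulerChar Δ = -∑ᶠ E ∈ Δ, (-1 : ℤ) ^ E.ncard := by
  obtain ⟨n, hn⟩ : ∃ n, ∀ E ∈ Δ, E.ncard ≤ n := by
    obtain ⟨n, hn⟩ := (hΔ.image Set.ncard).bddAbove
    exact ⟨n, fun E hE ↦ hn (Set.mem_image_of_mem _ hE)⟩
  have card_zero : {E | E ∈ Δ ∧ E.ncard = 0} = {∅} := by
    ext E
    refine ⟨fun ⟨hE, hcard⟩ ↦ (Set.ncard_eq_zero (hfin E hE)).mp hcard, ?_⟩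
    rintro rfl
    exact ⟨hempty, Set.ncard_empty _⟩
  have support_subset : (Function.support fun i : ℕ ↦
      (-1 : ℤ) ^ i * ({E | E ∈ Δ ∧ E.ncard = i + 1}.ncard : ℤ)) ⊆ Finset.range n := by
    intro i hi
    have hne : {E | E ∈ Δ ∧ E.ncard = i + 1}.ncard ≠ 0 := by
      exact_mod_cast right_ne_zero_of_mul hi
    obtain ⟨E, hE, hcard⟩ := Set.nonempty_of_ncard_ne_zero hne
    exact Finset.mem_coe.mpr (Finset.mem_range.mpr (by grind))
  rw [reducedEulerChar, finsum_eq_sum_of_support_subset _ support_subset,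
    finsum_mem_neg_one_pow_ncard hΔ hn, Finset.sum_range_succ', card_zero, Set.ncard_singleton]
  simp only [pow_succ, mul_neg_one, neg_mul, Finset.sum_neg_distrib, pow_zero, Nat.cast_one,
    one_mul]
  ring

end ReducedEulerChar

section MobiusFunction

variable {S : Set (Subgroup (V ≃ₗ[F] V))} {mu : Subgroup (V ≃ₗ[F] V) → Subgroup (V ≃ₗ[F] V) → ℤ}

theorem IsMobius.sum_Icc [LocallyFiniteOrder S] [DecidableEq S] (hmu : IsMobius S mu) {x y : S}
    (hxy : x ≤ y) : ∑ t ∈ Finset.Icc x y, mu x t = if x = y then 1 else 0 := by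
  split_ifs with h
  · subst h
    rw [Finset.Icc_self, Finset.sum_singleton, hmu.2.1 x x.2]
  · have interval_eq : {t | t ∈ S ∧ (x : Subgroup (V ≃ₗ[F] V)) ≤ t ∧ t ≤ y} =
        Subtype.val '' Set.Icc x y := by
      ext t
      simp only [Set.mem_ofPred_eq, Set.mem_image, Set.mem_Icc, ← Subtype.coe_le_coe]
      exact ⟨fun ⟨htS, ht⟩ ↦ ⟨⟨t, htS⟩, ht, rfl⟩, by rintro ⟨t, ht, rfl⟩; exact ⟨t.2, ht⟩⟩
    rw [← hmu.2.2 x x.2 y y.2 (lt_of_le_of_ne (α := S) hxy h), interval_eq,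
      finsum_mem_image Subtype.val_injective.injOn, ← Finset.coe_Icc, finsum_mem_coe_finset]

theorem IsMobius.eq_mu [LocallyFiniteOrder S] [DecidableEq S] (hmu : IsMobius S mu) (x y : S) :
    mu x y = IncidenceAlgebra.mu ℤ x y := by
  classical
  let m : IncidenceAlgebra ℤ S := ⟨fun x y ↦ mu x y, fun x y ↦ hmu.1 x x.2 y y.2⟩
  have m_mul_zeta : m * IncidenceAlgebra.zeta ℤ = 1 := by
    ext x y hxy
    rw [IncidenceAlgebra.mul_apply, IncidenceAlgebra.one_apply, ← hmu.sum_Icc hxy]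
    refine Finset.sum_congr rfl fun t ht ↦ ?_
    rw [IncidenceAlgebra.zeta_of_le (Finset.mem_Icc.mp ht).2, mul_one]
    rfl
  have m_eq : m = IncidenceAlgebra.mu ℤ :=
    left_inv_eq_right_inv m_mul_zeta IncidenceAlgebra.zeta_mul_mu
  rw [← m_eq]
  rfl

end MobiusFunction

section ReducibleSubgroups

variable {G H K : Subgroup (V ≃ₗ[F] V)} {W : Submodule F V}

theorem sstab_le (G : Subgroup (V ≃ₗ[F] V)) (W : Submodule F V) : sstab G W ≤ G :=
  fun _ hg ↦ hg.1

theorem le_sstab_of_mem_SStar (hHG : H ≤ G) (hW : W ∈ SStar H) : H ≤ sstab G W :=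
  fun g hg ↦ ⟨hHG hg, hW.2.2 g hg⟩

theorem sstab_ne_of_isIrred (hG : IsIrred G) (hbot : W ≠ ⊥) (htop : W ≠ ⊤) : sstab G W ≠ G :=
  fun h ↦ (hG W fun _ hg ↦ (h.ge hg).2).elim hbot htop

theorem le_of_mem_Ihat (hHG : H ≤ G) (hK : K ∈ Ihat G H) : H ≤ K ∧ K ≤ G := by
  rcases hK with ⟨M, ⟨W, -, -, -, rfl⟩, hHK, hKW⟩ | rfl | rfl
  exacts [⟨hHK, hKW.trans (sstab_le G W)⟩, ⟨le_rfl, hHG⟩, ⟨hHG, le_rfl⟩]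

theorem mem_Ihat_of_le_sstab (hHG : H ≤ G) (hW : W ∈ SStar H) (hHK : H ≤ K)
    (hKW : K ≤ sstab G W) : K ∈ Ihat G H :=
  Or.inl ⟨_, ⟨W, hW.1, hW.2.1, le_sstab_of_mem_SStar hHG hW, rfl⟩, hHK, hKW⟩

theorem exists_le_sstab_of_mem_Ihat (hK : K ∈ Ihat G H) (hKH : K ≠ H) (hKG : K ≠ G) :
    ∃ W ∈ SStar H, K ≤ sstab G W := by
  rcases hK with ⟨M, ⟨W, hbot, htop, hHW, rfl⟩, -, hKW⟩ | h | h
  · exact ⟨W, ⟨hbot, htop, fun g hg ↦ (hHW hg).2⟩, hKW⟩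
  · exact absurd h hKH
  · exact absurd h hKG

/-- The intersection of the stabilizers in `G` of the subspaces in `E`, equal to `G` when `E` is
empty. -/
def commonStab (G : Subgroup (V ≃ₗ[F] V)) (E : Set (Submodule F V)) : Subgroup (V ≃ₗ[F] V) :=
  G ⊓ ⨅ W ∈ E, sstab G W

theorem le_commonStab_iff (hKG : K ≤ G) {E : Set (Submodule F V)} :
    K ≤ commonStab G E ↔ ∀ W ∈ E, K ≤ sstab G W := by
  simp [commonStab, hKG]

theorem commonStab_empty (G : Subgroup (V ≃ₗ[F] V)) : commonStab G ∅ = G := by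
  simp [commonStab]

theorem commonStab_mem_Ihat (hHG : H ≤ G) {E : Set (Submodule F V)} (hE : E ⊆ SStar H) :
    commonStab G E ∈ Ihat G H := by
  rcases E.eq_empty_or_nonempty with rfl | ⟨W, hW⟩
  · rw [commonStab_empty]
    exact Or.inr (Or.inr rfl)
  · exact mem_Ihat_of_le_sstab hHG (hE hW)
      ((le_commonStab_iff hHG).mpr fun W hW ↦ le_sstab_of_mem_SStar hHG (hE hW))
      (inf_le_right.trans (iInf₂_le W hW))

/-- `H` and `G` are the minimum and the maximum of `Î(G, H)`. -/
abbrev Ihat.boundedOrder (hHG : H ≤ G) : BoundedOrder (Ihat G H) where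
  top := ⟨G, Or.inr (Or.inr rfl)⟩
  le_top K := (le_of_mem_Ihat hHG K.2).2
  bot := ⟨H, Or.inr (Or.inl rfl)⟩
  bot_le K := (le_of_mem_Ihat hHG K.2).1

theorem empty_mem_Psi' (hHG : H ≠ G) : ∅ ∈ Psi' G H := by
  have hne : commonStab G ∅ ≠ H := by
    rw [commonStab_empty]
    exact hHG.symm
  exact ⟨Set.empty_subset _, hne⟩

/-- The stabilizer of `W ∈ S(V,H)*` as an element of `Î(G, H)`. -/
def Ihat.stab (hHG : H ≤ G) (W : SStar H) : Ihat G H :=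
  ⟨sstab G W, mem_Ihat_of_le_sstab hHG W.2 (le_sstab_of_mem_SStar hHG W.2) le_rfl⟩

/-- The intersection of the stabilizers of the members of `E ⊆ S(V,H)*` as an element of
`Î(G, H)`; it is their meet in this poset. -/
def Ihat.meet (hHG : H ≤ G) (E : Finset (SStar H)) : Ihat G H :=
  ⟨commonStab G (Subtype.val '' (E : Set (SStar H))),
    commonStab_mem_Ihat hHG (Subtype.coe_image_subset _ _)⟩

theorem Ihat.isGLB_meet (hHG : H ≤ G) (E : Finset (SStar H)) :
    IsGLB (Ihat.stab hHG '' E) (Ihat.meet hHG E) := by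
  refine isGLB_iff_le_iff.mpr fun K ↦ ?_
  rw [← Subtype.coe_le_coe, Ihat.meet, le_commonStab_iff (le_of_mem_Ihat hHG K.2).2,
    mem_lowerBounds, Set.forall_mem_image, Set.forall_mem_image]
  rfl

theorem image_val_mem_Psi'_iff (hHG : H ≤ G) {E : Finset (SStar H)} :
    Subtype.val '' (E : Set (SStar H)) ∈ Psi' G H ↔
      (Ihat.meet hHG E : Subgroup (V ≃ₗ[F] V)) ≠ H :=
  and_iff_right (Subtype.coe_image_subset _ _)

theorem bijOn_image_val_Psi' [Finite (SStar H)] (hHG : H ≤ G) :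
    Set.BijOn (fun E : Finset (SStar H) ↦ Subtype.val '' (E : Set (SStar H)))
      {E | (Ihat.meet hHG E : Subgroup (V ≃ₗ[F] V)) ≠ H} (Psi' G H) := by
  refine ⟨fun E hE ↦ (image_val_mem_Psi'_iff hHG).mpr hE,
    (Subtype.val_injective.image_injective.comp Finset.coe_injective).injOn, fun E hE ↦ ?_⟩
  let E' : Finset (SStar H) := (Subtype.val ⁻¹' E : Set (SStar H)).toFinite.toFinset
  have image_eq : Subtype.val '' (E' : Set (SStar H)) = E := by
    rw [Set.Finite.coe_toFinset, Subtype.image_preimage_coe, Set.inter_eq_right.mpr hE.1]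
  exact ⟨E', (image_val_mem_Psi'_iff hHG).mp (image_eq ▸ hE), image_eq⟩

theorem reducedEulerChar_Psi' [Fintype (SStar H)] [DecidableEq (Subgroup (V ≃ₗ[F] V))]
    (hHG : H < G) :
    reducedEulerChar (Psi' G H) =
      -∑ E with (Ihat.meet hHG.le E : Subgroup (V ≃ₗ[F] V)) ≠ H, (-1 : ℤ) ^ E.card := by
  have SStar_finite : (SStar H).Finite := Set.toFinite _
  have Psi'_finite : (Psi' G H).Finite := SStar_finite.finite_subsets.subset fun E hE ↦ hE.1
  rw [reducedEulerChar_eq_neg_finsum Psi'_finite (fun E hE ↦ SStar_finite.subset hE.1)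
    (empty_mem_Psi' hHG.ne), ← finsum_mem_coe_finset, Finset.coe_filter_univ]
  congr 1
  refine (finsum_mem_eq_of_bijOn _ (bijOn_image_val_Psi' hHG.le) fun E _ ↦ ?_).symm
  rw [Set.ncard_image_of_injective _ Subtype.val_injective, Set.ncard_coe_finset]

theorem mobius_Ihat_eq_reduced_euler_Delta1_general (hHG : H < G) (hG : IsIrred G)
    (hI : (Ihat G H).Finite) (hS : (SStar H).Finite)
    {mu : Subgroup (V ≃ₗ[F] V) → Subgroup (V ≃ₗ[F] V) → ℤ} (hmu : IsMobius (Ihat G H) mu) :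
    mu H G = reducedEulerChar (Psi' G H) := by
  classical
  have := hI.fintype
  have := hS.fintype
  let _ : LocallyFiniteOrder (Ihat G H) := Fintype.toLocallyFiniteOrder
  let _ : BoundedOrder (Ihat G H) := Ihat.boundedOrder hHG.le
  have : Nontrivial (Ihat G H) := ⟨⊥, ⊤, fun h ↦ hHG.ne (congrArg Subtype.val h)⟩
  have stab_ne_top (W : SStar H) : Ihat.stab hHG.le W ≠ ⊤ :=
    fun h ↦ sstab_ne_of_isIrred hG W.2.1 W.2.2.1 (congrArg Subtype.val h)
  have exists_le_stab (K : Ihat G H) (hbot : K ≠ ⊥) (htop : K ≠ ⊤) :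
      ∃ W, K ≤ Ihat.stab hHG.le W := by
    obtain ⟨W, hW, hKW⟩ := exists_le_sstab_of_mem_Ihat K.2
      (fun h ↦ hbot (Subtype.ext h)) fun h ↦ htop (Subtype.ext h)
    exact ⟨⟨W, hW⟩, hKW⟩
  calc mu H G = IncidenceAlgebra.mu ℤ (⊥ : Ihat G H) ⊤ := hmu.eq_mu ⊥ ⊤
    _ = -∑ E with Ihat.meet hHG.le E ≠ ⊥, (-1 : ℤ) ^ E.card :=
      mu_bot_top_eq_neg_sum_of_crosscut (Ihat.isGLB_meet hHG.le) stab_ne_top exists_le_stab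
    _ = reducedEulerChar (Psi' G H) := by
      simp only [reducedEulerChar_Psi' hHG, ne_eq, Subtype.ext_iff]
      rfl

end ReducibleSubgroups

/-- Theorem 4.5: `μ_{Î(G,H)}(H,G) = χ̃(Δ₁)`, where `Δ₁` is the simplicial complex whose
faces are the elements of `Ψ'(G,H)`, and the reduced Euler characteristic is
`(Σ_{i ≥ 0} (−1)^i F_i) − 1` with `F_i` the number of faces of cardinality `i + 1`. -/
theorem mobius_Ihat_eq_reduced_euler_Delta1 [Fintype F] [FiniteDimensional F V]
    (G H : Subgroup (V ≃ₗ[F] V)) (hHG : H < G) (hGirr : IsIrred G)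
    (mu : Subgroup (V ≃ₗ[F] V) → Subgroup (V ≃ₗ[F] V) → ℤ) (hmu : IsMobius (Ihat G H) mu) :
    mu H G =
      (∑ᶠ i : ℕ, (-1 : ℤ) ^ i * ({E | E ∈ Psi' G H ∧ E.ncard = i + 1}.ncard : ℤ)) - 1 := by
  have : Finite V := Module.finite_of_finite F
  have : Finite (V ≃ₗ[F] V) := DFunLike.finite _
  exact mobius_Ihat_eq_reduced_euler_Delta1_general hHG hGirr (Set.toFinite _) (Set.toFinite _) hmu
end
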